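/- Let k > d ≥ 0 be integers and let G be a finite simple graph that is k-degenerate. Then the vertex set of G can be partitioned into two sets X and Y such that the subgraph of G induced on X is d-degenerate and the subgraph of G induced on Y is (k−d−1)-degenerate. -/

import Mathlib

/-- The subgraph of `G` induced on `A` is `d`-degenerate: every nonempty (finite)
subset of `A` contains a vertex with at most `d` neighbours inside that subset. -/
def DegenOn {V : Type*} (G : SimpleGraph V) (d : ℕ) (A : Set V) : Prop :=
  ∀ S : Set V, S ⊆ A → S.Finite → S.Nonempty → ∃ v ∈ S, (S ∩ G.neighborSet v).ncard ≤ d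

/-- `G` is `d`-degenerate. -/
def Degen {V : Type*} (G : SimpleGraph V) (d : ℕ) : Prop :=
  DegenOn G d Set.univ

/-- `α_d(G)`: the maximum number of vertices of an induced `d`-degenerate subgraph of `G`. -/
noncomputable def alphaDeg {V : Type*} [Fintype V] (G : SimpleGraph V) (d : ℕ) : ℕ :=
  sSup {m : ℕ | ∃ A : Set V, DegenOn G d A ∧ A.ncard = m}

/-!
Remove a vertex `v` of degree at most `k`, colour the rest inductively, and put `v` in a colour
class `i` containing at most `d i` of its neighbours; one exists since `k < ∑ i, (d i + 1)`. This
colours every finite set of vertices, and infinite graphs follow by compactness, because degeneracy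
is a condition on finite sets.
-/

section Coloring

variable {V ι : Type*} {G : SimpleGraph V} {k : ℕ} {d : ι → ℕ} {A B : Set V} {v : V}

theorem DegenOn.mono (hB : DegenOn G k B) (hAB : A ⊆ B) : DegenOn G k A :=
  fun S hS ↦ hB S (hS.trans hAB)

theorem DegenOn.insert (hA : DegenOn G k A) (hfin : (A ∩ G.neighborSet v).Finite)
    (hv : (A ∩ G.neighborSet v).ncard ≤ k) : DegenOn G k (insert v A) := by
  intro S hS hSfin hSne
  by_cases hvS : v ∈ S
  · have hsub : S ∩ G.neighborSet v ⊆ A ∩ G.neighborSet v := fun x hx ↦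
      ⟨Set.mem_of_mem_insert_of_ne (hS hx.1) (G.ne_of_adj hx.2).symm, hx.2⟩
    exact ⟨v, hvS, (Set.ncard_le_ncard hsub hfin).trans hv⟩
  · exact hA S ((Set.subset_insert_iff_of_notMem hvS).mp hS) hSfin hSne

theorem exists_ncard_inter_fiber_le [Fintype ι] (hA : A.Finite) (hAd : A.ncard < ∑ i, (d i + 1))
    (c : V → ι) : ∃ i, (A ∩ c ⁻¹' {i}).ncard ≤ d i := by
  classical
  lift A to Finset V using hA
  rw [Set.ncard_coe_finset, Finset.card_eq_sum_card_fiberwise (t := Finset.univ) (f := c)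
    fun _ _ ↦ Finset.mem_coe.mpr (Finset.mem_univ _)] at hAd
  obtain ⟨i, -, hi⟩ := Finset.exists_lt_of_sum_lt hAd
  refine ⟨i, ?_⟩
  have hfiber : (A : Set V) ∩ c ⁻¹' {i} = ({x ∈ A | c x = i} : Finset V) := by
    ext; simp
  rw [hfiber, Set.ncard_coe_finset]
  exact Nat.le_of_lt_succ hi

theorem exists_update_coloring_degenOn [DecidableEq V] [Fintype ι] {c : V → ι} (hA : A.Finite)
    (hvA : v ∉ A) (hc : ∀ i, DegenOn G (d i) (A ∩ c ⁻¹' {i}))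
    (hv : (A ∩ G.neighborSet v).ncard < ∑ i, (d i + 1)) :
    ∃ j, ∀ i, DegenOn G (d i) (insert v A ∩ Function.update c v j ⁻¹' {i}) := by
  obtain ⟨j, hj⟩ := exists_ncard_inter_fiber_le (hA.inter_of_left _) hv c
  rw [Set.inter_right_comm] at hj
  refine ⟨j, fun i ↦ ?_⟩
  obtain rfl | hij := eq_or_ne i j
  · refine ((hc i).insert ((hA.inter_of_left _).inter_of_left _) hj).mono ?_
    rintro x ⟨rfl | hxA, hxi⟩
    · exact Set.mem_insert _ _
    · rw [Set.mem_preimage, Function.update_of_ne (ne_of_mem_of_not_mem hxA hvA)] at hxi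
      exact Set.mem_insert_of_mem _ ⟨hxA, hxi⟩
  · refine (hc i).mono ?_
    rintro x ⟨rfl | hxA, hxi⟩
    · rw [Set.mem_preimage, Function.update_self] at hxi
      exact absurd hxi.symm hij
    · rw [Set.mem_preimage, Function.update_of_ne (ne_of_mem_of_not_mem hxA hvA)] at hxi
      exact ⟨hxA, hxi⟩

theorem DegenOn.exists_coloring_of_finite [Fintype ι] (hA : A.Finite) (hG : DegenOn G k A)
    (hk : k < ∑ i, (d i + 1)) : ∃ c : V → ι, ∀ i, DegenOn G (d i) (A ∩ c ⁻¹' {i}) := by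
  classical
  lift A to Finset V using hA
  induction A using Finset.strongInduction with
  | H A ih =>
    obtain rfl | hne := A.eq_empty_or_nonempty
    · obtain ⟨i, -, -⟩ := Finset.exists_ne_zero_of_sum_ne_zero (Nat.ne_zero_of_lt hk)
      refine ⟨fun _ ↦ i, fun _ S hS _ hSne ↦ ?_⟩
      simpa using hSne.mono hS
    · obtain ⟨v, hvA, hv⟩ := hG A subset_rfl A.finite_toSet hne
      obtain ⟨c, hc⟩ := ih (A.erase v) (Finset.erase_ssubset hvA)
        (hG.mono (Finset.coe_subset.mpr (Finset.erase_subset v A)))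
      have hdeg : (↑(A.erase v) ∩ G.neighborSet v).ncard ≤ (↑A ∩ G.neighborSet v).ncard :=
        Set.ncard_le_ncard (Set.inter_subset_inter_left _
          (Finset.coe_subset.mpr (Finset.erase_subset v A))) (A.finite_toSet.inter_of_left _)
      obtain ⟨j, hj⟩ := exists_update_coloring_degenOn (A.erase v).finite_toSet
        (Finset.notMem_erase v A) hc ((hdeg.trans hv).trans_lt hk)
      rw [← Finset.coe_insert, Finset.insert_erase hvA] at hj
      exact ⟨_, hj⟩

theorem Degen.exists_coloring [Fintype ι] (hG : Degen G k) (hk : k < ∑ i, (d i + 1)) :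
    ∃ c : V → ι, ∀ i, DegenOn G (d i) (c ⁻¹' {i}) := by
  have hfin (s : Set V) (hs : s.Finite) :
      ∃ c : V → ι, ∀ i, DegenOn G (d i) (s ∩ c ⁻¹' {i}) :=
    (DegenOn.mono hG s.subset_univ).exists_coloring_of_finite hs hk
  choose g hg using hfin
  obtain ⟨c, hc⟩ := Set.Finite.rado_selection g
  refine ⟨c, fun i S hS hSfin ↦ ?_⟩
  obtain ⟨t, ht, hSt, hagree⟩ := hc S hSfin
  exact hg t ht i S (fun x hx ↦ ⟨hSt hx, (hagree x hx).symm.trans (hS hx)⟩) hSfin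

end Coloring

theorem stmt_3_general {V : Type*} (G : SimpleGraph V) (a b : ℕ) (hG : Degen G (a + b + 1)) :
    ∃ X Y : Set V, X ∪ Y = Set.univ ∧ Disjoint X Y ∧ DegenOn G a X ∧ DegenOn G b Y := by
  have hsum : a + b + 1 < ∑ i : Bool, ((if i then a else b) + 1) := by
    simp only [Fintype.sum_bool, if_true, Bool.false_eq_true, if_false]
    omega
  obtain ⟨c, hc⟩ := hG.exists_coloring hsum
  exact ⟨c ⁻¹' {true}, c ⁻¹' {false},
    Set.eq_univ_of_forall fun x ↦ Bool.eq_false_or_eq_true (c x),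
    Disjoint.preimage c (by simp), by simpa using hc true, by simpa using hc false⟩

theorem stmt_3 {V : Type*} [Fintype V] (G : SimpleGraph V) (k d : ℕ) (hdk : d < k)
    (hG : Degen G k) :
    ∃ X Y : Set V, X ∪ Y = Set.univ ∧ Disjoint X Y ∧
      DegenOn G d X ∧ DegenOn G (k - d - 1) Y :=
  stmt_3_general G d (k - d - 1) (by rwa [show d + (k - d - 1) + 1 = k by omega])
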